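/- Let (Ω, μ) be a measure space and let p : Ω × I → ℝ be a family of probability densities indexed by an open interval I ⊆ ℝ, so that p(ω, θ) ≥ 0 and ∫ p(ω, θ) dμ(ω) = 1 for each θ ∈ I. Fix θ₀ ∈ I and assume: (i) for μ-a.e. ω, θ ↦ p(ω, θ) is differentiable at θ₀ with derivative ∂θp(ω, θ₀); (ii) T : Ω → ℝ is an unbiased estimator in the sense that ∫ T(ω) p(ω, θ) dμ(ω) = θ for all θ ∈ I, and differentiation under the integral is valid so that ∫ ∂θp(ω, θ₀) dμ(ω) = 0 and ∫ T(ω) ∂θp(ω, θ₀) dμ(ω) = 1; (iii) the Fisher information Iₓ(θ₀) = ∫ (∂θp(ω, θ₀))² / p(ω, θ₀) dμ(ω) (with the integrand taken as 0 where p(ω, θ₀) = 0) is finite and positive, and T² p(·, θ₀) is integrable. Then the variance of T under the density p(·, θ₀) satisfies Var_{θ₀}(T) = ∫ (T(ω) − θ₀)² p(ω, θ₀) dμ(ω) ≥ 1 / Iₓ(θ₀). -/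

import Mathlib

open MeasureTheory

/-- **Scalar Cramér–Rao lower bound.**
Let `(Ω, μ)` be a measure space and `p : Ω → ℝ → ℝ` a family of probability
densities indexed by an open interval `I ⊆ ℝ` (`p ω θ ≥ 0` and
`∫ p (·, θ) dμ = 1` for `θ ∈ I`).  Fix `θ₀ ∈ I` and assume:
(i) for `μ`-a.e. `ω`, `θ ↦ p ω θ` is differentiable at `θ₀` with derivative
`dp ω`; (ii) `T` is an unbiased estimator, `∫ T ω * p ω θ dμ = θ` for all
`θ ∈ I`, and differentiation under the integral is valid at `θ₀`:
`∫ dp dμ = 0` and `∫ T * dp dμ = 1`; (iii) the Fisher information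
`Iₓ(θ₀) = ∫ (dp ω)² / p ω θ₀ dμ` (the integrand vanishing where `p ω θ₀ = 0`,
as Lean's division by zero yields `0`) is finite (the integrand is integrable)
and positive, and `T² p (·, θ₀)` is integrable.  Then the variance of `T`
under `p (·, θ₀)` satisfies `∫ (T ω − θ₀)² p ω θ₀ dμ ≥ 1 / Iₓ(θ₀)`. -/
theorem cramer_rao_lower_bound
    {Ω : Type*} [MeasurableSpace Ω] (μ : Measure Ω)
    (I : Set ℝ) (hIopen : IsOpen I) (hIinterval : I.OrdConnected)
    (p : Ω → ℝ → ℝ)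
    (hp_nonneg : ∀ ω, ∀ θ ∈ I, 0 ≤ p ω θ)
    (hp_prob : ∀ θ ∈ I, ∫ ω, p ω θ ∂μ = 1)
    (θ₀ : ℝ) (hθ₀ : θ₀ ∈ I)
    (dp : Ω → ℝ)
    (hdp : ∀ᵐ ω ∂μ, HasDerivAt (fun θ => p ω θ) (dp ω) θ₀)
    (T : Ω → ℝ)
    (hT_unbiased : ∀ θ ∈ I, ∫ ω, T ω * p ω θ ∂μ = θ)
    (h_swap₀ : ∫ ω, dp ω ∂μ = 0)
    (h_swap₁ : ∫ ω, T ω * dp ω ∂μ = 1)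
    (h_fisher_int : Integrable (fun ω => (dp ω) ^ 2 / p ω θ₀) μ)
    (h_fisher_pos : 0 < ∫ ω, (dp ω) ^ 2 / p ω θ₀ ∂μ)
    (hT_sq_int : Integrable (fun ω => (T ω) ^ 2 * p ω θ₀) μ) :
    1 / (∫ ω, (dp ω) ^ 2 / p ω θ₀ ∂μ) ≤ ∫ ω, (T ω - θ₀) ^ 2 * p ω θ₀ ∂μ := by
  have hI : I ∈ nhds θ₀ := hIopen.mem_nhds hθ₀
  have hp_int : ∀ θ ∈ I, Integrable (fun ω => p ω θ) μ := fun θ hθ =>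
    Integrable.of_integral_ne_zero (by rw [hp_prob θ hθ]; norm_num)
  have hp0 := hp_int θ₀ hθ₀
  -- a sequence in `I`, avoiding `θ₀` and `0`, converging to `θ₀`
  obtain ⟨u, hu, huI⟩ : ∃ u : ℕ → ℝ, Filter.Tendsto u Filter.atTop (nhdsWithin θ₀ {θ₀}ᶜ) ∧
      ∀ n, u n ∈ I ∧ u n ≠ 0 := by
    have hfreq : ∀ᶠ x in nhdsWithin θ₀ {θ₀}ᶜ, x ∈ I ∧ x ≠ 0 := by
      refine Filter.Eventually.and (nhdsWithin_le_nhds hI) ?_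
      by_cases h0 : θ₀ = 0
      · subst h0
        exact self_mem_nhdsWithin
      · exact nhdsWithin_le_nhds (isOpen_ne.mem_nhds h0)
    obtain ⟨v, hv⟩ := Filter.exists_seq_tendsto (nhdsWithin θ₀ ({θ₀}ᶜ : Set ℝ))
    obtain ⟨N, hN⟩ := Filter.eventually_atTop.1 (hv.eventually hfreq)
    exact ⟨fun n => v (n + N), hv.comp (Filter.tendsto_add_atTop_nat N),
      fun n => hN _ (Nat.le_add_left _ _)⟩
  have hdp_meas : AEStronglyMeasurable dp μ := by
    refine aestronglyMeasurable_of_tendsto_ae Filter.atTop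
      (f := fun n ω => (u n - θ₀)⁻¹ * (p ω (u n) - p ω θ₀)) ?_ ?_
    · intro n
      exact (((hp_int _ (huI n).1).sub hp0).const_mul _).aestronglyMeasurable
    · filter_upwards [hdp] with ω hω
      have := (hasDerivAt_iff_tendsto_slope.1 hω).comp hu
      simpa [slope, Function.comp_def] using this
  have hTp_meas : AEStronglyMeasurable (fun ω => T ω * p ω θ₀) μ := by
    refine aestronglyMeasurable_of_tendsto_ae Filter.atTop
      (f := fun n ω => T ω * p ω (u n)) ?_ ?_
    · intro n
      exact (Integrable.of_integral_ne_zero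
        (by rw [hT_unbiased _ (huI n).1]; exact (huI n).2)).aestronglyMeasurable
    · filter_upwards [hdp] with ω hω
      have h1 : Filter.Tendsto (fun θ => p ω θ) (nhds θ₀) (nhds (p ω θ₀)) := hω.continuousAt
      exact (h1.comp (hu.mono_right nhdsWithin_le_nhds)).const_mul _
  -- the derivative vanishes where the density does
  have hzero : ∀ᵐ ω ∂μ, p ω θ₀ = 0 → dp ω = 0 := by
    filter_upwards [hdp] with ω hω h0
    have hmin : IsLocalMin (fun θ => p ω θ) θ₀ := by
      filter_upwards [hI] with θ hθ
      rw [h0]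
      exact hp_nonneg ω θ hθ
    exact hmin.hasDerivAt_eq_zero hω
  have hdp_int : Integrable dp μ := by
    refine (h_fisher_int.add hp0).mono' hdp_meas ?_
    filter_upwards [hzero] with ω hz
    have hnn := hp_nonneg ω θ₀ hθ₀
    rcases hnn.eq_or_lt with h | h
    · simp [hz h.symm, hnn]
    · simp only [Pi.add_apply, Real.norm_eq_abs]
      rw [div_add' _ _ _ h.ne', le_div_iff₀ h, ← sq_abs (dp ω)]
      nlinarith [sq_nonneg (|dp ω| - p ω θ₀), abs_nonneg (dp ω), mul_nonneg (abs_nonneg (dp ω)) h.le]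
  have hTp_int : Integrable (fun ω => T ω * p ω θ₀) μ := by
    refine (hT_sq_int.add hp0).mono' hTp_meas ?_
    filter_upwards with ω
    have hnn := hp_nonneg ω θ₀ hθ₀
    simp only [Pi.add_apply, Real.norm_eq_abs]
    rw [abs_mul, abs_of_nonneg hnn, ← sq_abs (T ω)]
    nlinarith [mul_nonneg hnn (sq_nonneg (|T ω| - 1)), mul_nonneg hnn (abs_nonneg (T ω))]
  have hTdp_int : Integrable (fun ω => T ω * dp ω) μ :=
    Integrable.of_integral_ne_zero (by rw [h_swap₁]; norm_num)
  have hV_int : Integrable (fun ω => (T ω - θ₀) ^ 2 * p ω θ₀) μ := by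
    have h := (hT_sq_int.sub (hTp_int.const_mul (2 * θ₀))).add (hp0.const_mul (θ₀ ^ 2))
    refine h.congr (Filter.Eventually.of_forall fun ω => ?_)
    simp only [Pi.add_apply, Pi.sub_apply]
    ring
  set F := ∫ ω, (dp ω) ^ 2 / p ω θ₀ ∂μ with hF
  have hle : ∫ ω, 2 * (T ω * dp ω - θ₀ * dp ω) ∂μ ≤
      ∫ ω, (F * ((T ω - θ₀) ^ 2 * p ω θ₀) + F⁻¹ * ((dp ω) ^ 2 / p ω θ₀)) ∂μ := by
    refine integral_mono_ae ((hTdp_int.sub (hdp_int.const_mul θ₀)).const_mul 2)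
      ((hV_int.const_mul F).add (h_fisher_int.const_mul F⁻¹)) ?_
    filter_upwards [hzero] with ω hz
    rcases (hp_nonneg ω θ₀ hθ₀).eq_or_lt with h | h
    · simp [hz h.symm, ← h]
    · have key : F * ((T ω - θ₀) ^ 2 * p ω θ₀) + F⁻¹ * ((dp ω) ^ 2 / p ω θ₀)
          - 2 * (T ω * dp ω - θ₀ * dp ω)
          = (F * (T ω - θ₀) * p ω θ₀ - dp ω) ^ 2 / (F * p ω θ₀) := by
        have h1 := h_fisher_pos.ne'
        have h2 := h.ne'
        field_simp
        ring
      have : 0 ≤ (F * (T ω - θ₀) * p ω θ₀ - dp ω) ^ 2 / (F * p ω θ₀) := by positivity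
      linarith
  rw [integral_const_mul, integral_sub hTdp_int (hdp_int.const_mul θ₀), integral_const_mul,
    h_swap₀, h_swap₁, integral_add (hV_int.const_mul F) (h_fisher_int.const_mul F⁻¹),
    integral_const_mul, integral_const_mul, ← hF, inv_mul_cancel₀ h_fisher_pos.ne'] at hle
  rw [div_le_iff₀ h_fisher_pos]
  linarith
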